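/- Assume the sub-critical range q > 1 and (2/3)q + 1 < p < q + 2/3, and let M < ∞. There is a constant C(M,p,q) > 0 such that every injective, arc-length parametrized curve γ ∈ C¹(ℝ/ℤ,ℝⁿ) with E_{p,q}(γ) ≤ M satisfies the bi-Lipschitz estimate d_{ℝ/ℤ}(u,v) ≤ C(M,p,q) |γ(u) − γ(v)| for all u, v ∈ ℝ/ℤ. -/

import Mathlib

open MeasureTheory Set Filter Topology
open scoped ENNReal

noncomputable section

/-- The area `|a ∧ b|` of the parallelogram spanned by `a, b ∈ ℝⁿ`. -/
def wedgeNorm {n : ℕ} (a b : EuclideanSpace ℝ (Fin n)) : ℝ :=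
  Real.sqrt (‖a‖ ^ 2 * ‖b‖ ^ 2 - (inner ℝ a b : ℝ) ^ 2)

/-- `1 / R^{p,q}(x,y,z) = |(y-x) ∧ (z-x)|^q / (|y-z| |y-x| |z-x|)^p`. -/
def invR {n : ℕ} (p q : ℝ) (x y z : EuclideanSpace ℝ (Fin n)) : ℝ :=
  wedgeNorm (y - x) (z - x) ^ q / (‖y - z‖ * ‖y - x‖ * ‖z - x‖) ^ p

/-- The generalized integral Menger curvature `E_{p,q}` of a closed curve,
modelled by a `1`-periodic function together with its derivative,
the parameter domain `ℝ/ℤ` being represented by `[0,1)`; values in `[0,∞]`. -/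
def menger {n : ℕ} (p q : ℝ) (γ γ' : ℝ → EuclideanSpace ℝ (Fin n)) : ℝ≥0∞ :=
  ∫⁻ u₁ in Ico (0:ℝ) 1, ∫⁻ u₂ in Ico (0:ℝ) 1, ∫⁻ u₃ in Ico (0:ℝ) 1,
    ENNReal.ofReal (‖γ' u₁‖ * ‖γ' u₂‖ * ‖γ' u₃‖ * invR p q (γ u₁) (γ u₂) (γ u₃))

/-- Injectivity of a `1`-periodic curve as a map on `ℝ/ℤ`. -/
def InjCircle {n : ℕ} (γ : ℝ → EuclideanSpace ℝ (Fin n)) : Prop :=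
  ∀ u v : ℝ, γ u = γ v → ∃ k : ℤ, v = u + k

/-- Distance on `ℝ/ℤ`. -/
def circleDist (u v : ℝ) : ℝ := ⨅ k : ℤ, |u - v - (k : ℝ)|

/-- The `ρ`-th power of the Sobolev–Slobodeckiĭ seminorm `[f]_{W^{1+s,ρ}}`
of a periodic function with derivative `f'`; values in `[0,∞]`. -/
def sobSemiPow {n : ℕ} (s ρ : ℝ) (f' : ℝ → EuclideanSpace ℝ (Fin n)) : ℝ≥0∞ :=
  ∫⁻ u in Ico (0:ℝ) 1, ∫⁻ w in Icc (-(1/2) : ℝ) (1/2),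
    ENNReal.ofReal (‖f' (u + w) - f' u‖ ^ ρ / |w| ^ (1 + ρ * s))

/-- The norm `‖f‖_{W^{1+s,ρ}} = ‖f‖_{W^{1,ρ}} + [f]_{W^{1+s,ρ}}`. -/
def sobNorm {n : ℕ} (s ρ : ℝ) (f f' : ℝ → EuclideanSpace ℝ (Fin n)) : ℝ :=
  (∫ u in Ico (0:ℝ) 1, ‖f u‖ ^ ρ) ^ (1/ρ) + (∫ u in Ico (0:ℝ) 1, ‖f' u‖ ^ ρ) ^ (1/ρ)
    + (sobSemiPow s ρ f').toReal ^ (1/ρ)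

/-- `γ` is a closed `W^{1,1}` curve with weak derivative `γ'`:
both are `1`-periodic, `γ'` is measurable and `γ` is the primitive of `γ'`. -/
structure CurvePair {n : ℕ} (γ γ' : ℝ → EuclideanSpace ℝ (Fin n)) : Prop where
  periodic : Function.Periodic γ 1
  periodic' : Function.Periodic γ' 1
  meas' : Measurable γ'
  primitive : ∀ u, γ u = γ 0 + ∫ t in (0:ℝ)..u, γ' t

section Wedge

variable {n : ℕ}

lemma wedgeNorm_sq (a b : EuclideanSpace ℝ (Fin n)) :
    wedgeNorm a b ^ 2 = ‖a‖ ^ 2 * ‖b‖ ^ 2 - (inner ℝ a b : ℝ) ^ 2 := by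
  rw [wedgeNorm, Real.sq_sqrt]
  have h := abs_real_inner_le_norm a b
  have h2 := pow_le_pow_left₀ (abs_nonneg _) h 2
  rw [sq_abs, mul_pow] at h2
  linarith

lemma wedgeNorm_nonneg (a b : EuclideanSpace ℝ (Fin n)) : 0 ≤ wedgeNorm a b :=
  Real.sqrt_nonneg _

lemma wedgeNorm_comm (a b : EuclideanSpace ℝ (Fin n)) : wedgeNorm a b = wedgeNorm b a := by
  rw [wedgeNorm, wedgeNorm, real_inner_comm, mul_comm]

lemma wedgeNorm_neg_left (a b : EuclideanSpace ℝ (Fin n)) :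
    wedgeNorm (-a) b = wedgeNorm a b := by
  simp [wedgeNorm]

lemma wedgeNorm_self (a : EuclideanSpace ℝ (Fin n)) : wedgeNorm a a = 0 := by
  rw [wedgeNorm, real_inner_self_eq_norm_sq, Real.sqrt_eq_zero']
  exact le_of_eq (by ring)

lemma wedgeNorm_zero_right (a : EuclideanSpace ℝ (Fin n)) : wedgeNorm a 0 = 0 := by
  simp [wedgeNorm]

lemma wedgeNorm_le (a b : EuclideanSpace ℝ (Fin n)) : wedgeNorm a b ≤ ‖a‖ * ‖b‖ := by
  refine abs_le_of_sq_le_sq' ?_ (by positivity) |>.2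
  rw [wedgeNorm_sq]
  nlinarith [sq_nonneg (inner ℝ a b : ℝ)]

lemma norm_mul_wedgeNorm (a b : EuclideanSpace ℝ (Fin n)) :
    ‖b‖ * wedgeNorm a b = ‖‖b‖ ^ 2 • a - (inner ℝ a b : ℝ) • b‖ := by
  rw [← sq_eq_sq₀ (mul_nonneg (norm_nonneg _) (wedgeNorm_nonneg _ _)) (norm_nonneg _),
    mul_pow, wedgeNorm_sq, norm_sub_sq_real, norm_smul, norm_smul, inner_smul_left,
    inner_smul_right]
  simp only [Real.norm_eq_abs, mul_pow, sq_abs, conj_trivial]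
  ring

lemma wedgeNorm_add_left_le (a c b : EuclideanSpace ℝ (Fin n)) :
    wedgeNorm (a + c) b ≤ wedgeNorm a b + ‖c‖ * ‖b‖ := by
  rcases eq_or_ne b 0 with rfl | hb
  · simp [wedgeNorm_zero_right]
  have hb' : 0 < ‖b‖ := norm_pos_iff.mpr hb
  refine le_trans (le_of_mul_le_mul_left ?_ hb')
    (add_le_add_right (wedgeNorm_le c b) (wedgeNorm a b))
  rw [mul_add, norm_mul_wedgeNorm, norm_mul_wedgeNorm, norm_mul_wedgeNorm, inner_add_left]
  refine le_trans (le_of_eq ?_) (norm_add_le _ _)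
  congr 1
  module

/-- The wedge norm of `a'`, `b'` controls that of nearby vectors `a`, `b`. -/
lemma wedgeNorm_le_wedgeNorm_add (a b a' b' : EuclideanSpace ℝ (Fin n)) :
    wedgeNorm a b ≤ wedgeNorm a' b' + ‖a - a'‖ * ‖b‖ + ‖a'‖ * ‖b - b'‖ := by
  have h1 := wedgeNorm_add_left_le a' (a - a') b
  have h2 := wedgeNorm_add_left_le b' (b - b') a'
  rw [add_sub_cancel] at h1 h2
  rw [wedgeNorm_comm b a', wedgeNorm_comm b' a'] at h2
  linarith

/-- If `a`, `b` of length comparable to `h` do not point in opposite directions, then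
the defect in the triangle inequality is quadratic in their wedge norm. -/
lemma norm_add_norm_sub_le {a b : EuclideanSpace ℝ (Fin n)} {h : ℝ} (hh : 0 < h)
    (ha : 7 / 16 * h ≤ ‖a‖) (hb : 7 / 16 * h ≤ ‖b‖) (hab : 0 ≤ (inner ℝ a b : ℝ)) :
    (‖a‖ + ‖b‖ - ‖a + b‖) * h ^ 3 ≤ 12 * wedgeNorm a b ^ 2 := by
  have hw := wedgeNorm_sq a b
  have hS := norm_add_sq_real a b
  have hST := norm_add_le a b
  have hCS := real_inner_le_norm a b
  set s : ℝ := inner ℝ a b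
  set S := ‖a + b‖
  set x := ‖a‖
  set y := ‖b‖
  have hS0 : 0 ≤ S := norm_nonneg _
  have hx0 : 0 < x := lt_of_lt_of_le (by positivity) ha
  have hy0 : 0 < y := lt_of_lt_of_le (by positivity) hb
  have h1 : (x + y - S) * (x + y) ≤ 2 * (x * y - s) := by nlinarith
  have h2 : (x * y - s) * (x * y) ≤ wedgeNorm a b ^ 2 := by rw [hw]; nlinarith
  have h3 : (x + y - S) * (x + y) * (x * y) ≤ 2 * wedgeNorm a b ^ 2 := by
    calc _ ≤ 2 * (x * y - s) * (x * y) := by gcongr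
      _ ≤ _ := by linarith
  have h4 : (7 / 16 * h + 7 / 16 * h) * (7 / 16 * h * (7 / 16 * h)) ≤ (x + y) * (x * y) := by
    gcongr
  have h5 := mul_le_mul_of_nonneg_left h4 (sub_nonneg.mpr hST)
  have h6 : 0 ≤ (x + y - S) * h ^ 3 := mul_nonneg (sub_nonneg.mpr hST) (by positivity)
  have h7 := sq_nonneg (wedgeNorm a b)
  nlinarith

/-- A vector `b` of length `d` and two almost opposite vectors `a`, `a'` of length about `d`
whose tips are not closer to `b` than the origin: one of them is transversal to `b`. -/
lemma exists_wedgeNorm_ge {a a' b : EuclideanSpace ℝ (Fin n)} {d : ℝ} (hd : 0 < d)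
    (hb : ‖b‖ = d) (ha : ‖a‖ ≤ d) (ha' : ‖a'‖ ≤ d) (h7a : 7 / 8 * d ≤ ‖a‖)
    (h7a' : 7 / 8 * d ≤ ‖a'‖) (haa' : 7 / 4 * d ≤ ‖a - a'‖)
    (hab : d ≤ ‖a - b‖) (ha'b : d ≤ ‖a' - b‖) :
    d ^ 2 / 2 < wedgeNorm a b ∨ d ^ 2 / 2 < wedgeNorm a' b := by
  have key : ∀ c : EuclideanSpace ℝ (Fin n), 7 / 8 * d ≤ ‖c‖ → |(inner ℝ c b : ℝ)| ≤ d ^ 2 / 2 →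
      d ^ 2 / 2 < wedgeNorm c b := by
    intro c hc hi
    refine abs_lt_of_sq_lt_sq' ?_ (wedgeNorm_nonneg _ _) |>.2
    rw [wedgeNorm_sq, hb]
    have h1 : (inner ℝ c b : ℝ) ^ 2 ≤ (d ^ 2 / 2) ^ 2 := by
      rw [← sq_abs]; exact pow_le_pow_left₀ (abs_nonneg _) hi 2
    have h2 : (7 / 8 * d) ^ 2 ≤ ‖c‖ ^ 2 := pow_le_pow_left₀ (by positivity) hc 2
    have h3 : 0 < d ^ 2 := by positivity
    nlinarith
  have e1 := norm_sub_sq_real a b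
  have e2 := norm_sub_sq_real a' b
  have e3 := norm_sub_sq_real a a'
  have e4 := norm_add_sq_real a a'
  have q1 : d ^ 2 ≤ ‖a - b‖ ^ 2 := pow_le_pow_left₀ hd.le hab 2
  have q2 : d ^ 2 ≤ ‖a' - b‖ ^ 2 := pow_le_pow_left₀ hd.le ha'b 2
  have q3 : (7 / 4 * d) ^ 2 ≤ ‖a - a'‖ ^ 2 := pow_le_pow_left₀ (by positivity) haa' 2
  have q4 : ‖a‖ ^ 2 ≤ d ^ 2 := pow_le_pow_left₀ (norm_nonneg _) ha 2
  have q5 : ‖a'‖ ^ 2 ≤ d ^ 2 := pow_le_pow_left₀ (norm_nonneg _) ha' 2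
  rw [hb] at e1 e2
  have hs : ‖a + a'‖ ≤ d := by
    refine abs_le_of_sq_le_sq' ?_ hd.le |>.2
    nlinarith
  have hi : |(inner ℝ a b : ℝ) + inner ℝ a' b| ≤ d ^ 2 := by
    rw [← inner_add_left]
    calc _ ≤ ‖a + a'‖ * ‖b‖ := abs_real_inner_le_norm _ _
      _ ≤ d * d := by rw [hb]; gcongr
      _ = d ^ 2 := by ring
  rcases le_or_gt (-(d ^ 2 / 2)) (inner ℝ a b : ℝ) with h | h
  · exact Or.inl (key a h7a (abs_le.mpr ⟨h, by linarith⟩))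
  · refine Or.inr (key a' h7a' (abs_le.mpr ⟨?_, by linarith⟩))
    have := (abs_le.mp hi).1
    linarith

end Wedge

section Flatness

lemma mul_le_setLIntegral_Ico {f : ℝ → ℝ≥0∞} {c : ℝ≥0∞} {a δ : ℝ} (ha : 0 ≤ a) (haδ : a + δ ≤ 1)
    (hf : ∀ x ∈ Ico a (a + δ), c ≤ f x) :
    c * ENNReal.ofReal δ ≤ ∫⁻ x in Ico (0:ℝ) 1, f x := by
  calc c * ENNReal.ofReal δ = ∫⁻ _ in Ico a (a + δ), c := by
        rw [setLIntegral_const, Real.volume_Ico, add_sub_cancel_left]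
    _ ≤ ∫⁻ x in Ico a (a + δ), f x := setLIntegral_mono' measurableSet_Ico hf
    _ ≤ ∫⁻ x in Ico (0:ℝ) 1, f x := lintegral_mono_set (Ico_subset_Ico ha haδ)

/-- Every point of the curve has the image of some interval of length `δ` in the fundamental
domain `[0,1)` within distance `δ`. -/
lemma exists_Ico_dist_le {E : Type*} [NormedAddCommGroup E] {γ : ℝ → E}
    (hper : Function.Periodic γ 1) (hlip : ∀ s t, ‖γ s - γ t‖ ≤ |s - t|) {δ : ℝ}
    (hδ1 : δ ≤ 1 / 2) (u : ℝ) :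
    ∃ a : ℝ, 0 ≤ a ∧ a + δ ≤ 1 ∧ ∀ t ∈ Ico a (a + δ), ‖γ t - γ u‖ ≤ δ := by
  have hu : γ u = γ (Int.fract u) := by
    have h := hper.sub_zsmul_eq (x := u) ⌊u⌋
    rw [zsmul_one] at h
    exact h.symm
  have h0 := Int.fract_nonneg u
  have h1 := (Int.fract_lt_one u).le
  rw [hu]
  rcases le_total (Int.fract u) (1 / 2) with h | h
  · refine ⟨Int.fract u, h0, by linarith, fun t ht => (hlip _ _).trans (abs_le.mpr ?_)⟩
    constructor <;> linarith [ht.1, ht.2]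
  · refine ⟨Int.fract u - δ, by linarith, by linarith, fun t ht => (hlip _ _).trans (abs_le.mpr ?_)⟩
    constructor <;> linarith [ht.1, ht.2]

variable {n : ℕ}

lemma le_invR {p q W r : ℝ} (hp : 0 ≤ p) (hq : 0 ≤ q) (hW : 0 < W)
    {x y z : EuclideanSpace ℝ (Fin n)} (hxyz : W ≤ wedgeNorm (y - x) (z - x))
    (hyx : ‖y - x‖ ≤ 2 * r) (hzx : ‖z - x‖ ≤ 2 * r) :
    W ^ q / (16 * r ^ 3) ^ p ≤ invR p q x y z := by
  have hr : 0 ≤ 2 * r := (norm_nonneg _).trans hyx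
  have hyz : ‖y - z‖ ≤ 4 * r := by
    have := norm_sub_le (y - x) (z - x)
    rw [sub_sub_sub_cancel_right] at this
    linarith
  have h1 : 0 < ‖y - z‖ := by
    rw [norm_pos_iff, sub_ne_zero]
    rintro rfl
    rw [wedgeNorm_self] at hxyz
    linarith
  have h23 := hW.trans_le (hxyz.trans (wedgeNorm_le _ _))
  have h123 : 0 < ‖y - z‖ * ‖y - x‖ * ‖z - x‖ := by rw [mul_assoc]; positivity
  have hle : ‖y - z‖ * ‖y - x‖ * ‖z - x‖ ≤ 16 * r ^ 3 := by
    have hr' : 0 ≤ r := by linarith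
    calc _ ≤ 4 * r * (2 * r) * (2 * r) := by gcongr
      _ = _ := by ring
  have hw := wedgeNorm_nonneg (y - x) (z - x)
  rw [invR]
  gcongr

/-- A triangle inscribed in a `1`-Lipschitz closed curve bounds the energy from below. -/
lemma wedgeNorm_rpow_le_of_menger_le {p q M : ℝ} (hp : 0 ≤ p) (hq : 0 ≤ q) (hM : 0 ≤ M)
    {γ γ' : ℝ → EuclideanSpace ℝ (Fin n)} (hper : Function.Periodic γ 1)
    (hlip : ∀ s t, ‖γ s - γ t‖ ≤ |s - t|) (hγ' : ∀ u, ‖γ' u‖ = 1)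
    (hE : menger p q γ γ' ≤ ENNReal.ofReal M) {r : ℝ} (hr : 0 < r) (hr1 : r ≤ 1) {u v w : ℝ}
    (hv : ‖γ v - γ u‖ ≤ r) (hw : ‖γ w - γ u‖ ≤ r) :
    wedgeNorm (γ v - γ u) (γ w - γ u) ^ (3 + q) ≤
      M * 12 ^ (3:ℝ) * 2 ^ q * 16 ^ p * r ^ (3 + 3 * p) := by
  set W := wedgeNorm (γ v - γ u) (γ w - γ u)
  have hW0 : 0 ≤ W := wedgeNorm_nonneg _ _
  rcases hW0.eq_or_lt with h0 | hW
  · rw [← h0, Real.zero_rpow (by linarith)]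
    positivity
  have hWr : W ≤ r * r := (wedgeNorm_le _ _).trans (by gcongr)
  set δ := W / (12 * r) with hδ
  have hδ0 : 0 < δ := by positivity
  have hδr : δ * (12 * r) = W := by rw [hδ]; field_simp
  have hδr' : δ ≤ r / 12 := by nlinarith
  obtain ⟨a, ha0, ha1, ha⟩ := exists_Ico_dist_le hper hlip (δ := δ) (by linarith) u
  obtain ⟨b, hb0, hb1, hb⟩ := exists_Ico_dist_le hper hlip (δ := δ) (by linarith) v
  obtain ⟨c, hc0, hc1, hc⟩ := exists_Ico_dist_le hper hlip (δ := δ) (by linarith) w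
  have key : ∀ s ∈ Ico a (a + δ), ∀ t ∈ Ico b (b + δ), ∀ m ∈ Ico c (c + δ),
      (W / 2) ^ q / (16 * r ^ 3) ^ p ≤ invR p q (γ s) (γ t) (γ m) := by
    intro s hs t ht m hm
    have hts : ‖(γ t - γ s) - (γ v - γ u)‖ ≤ 2 * δ := by
      have := norm_sub_le (γ t - γ v) (γ s - γ u)
      rw [sub_sub_sub_comm]
      linarith [ha s hs, hb t ht]
    have hms : ‖(γ m - γ s) - (γ w - γ u)‖ ≤ 2 * δ := by
      have := norm_sub_le (γ m - γ w) (γ s - γ u)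
      rw [sub_sub_sub_comm]
      linarith [ha s hs, hc m hm]
    have h1 : ‖γ t - γ s‖ ≤ 2 * r := by
      linarith [norm_le_norm_add_norm_sub' (γ t - γ s) (γ v - γ u)]
    have h2 : ‖γ m - γ s‖ ≤ 2 * r := by
      linarith [norm_le_norm_add_norm_sub' (γ m - γ s) (γ w - γ u)]
    refine le_invR hp hq (by positivity) ?_ h1 h2
    have h3 := wedgeNorm_le_wedgeNorm_add (γ v - γ u) (γ w - γ u) (γ t - γ s) (γ m - γ s)
    rw [norm_sub_rev] at hts hms
    have h4 : ‖γ v - γ u - (γ t - γ s)‖ * ‖γ w - γ u‖ ≤ 2 * δ * r := by gcongr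
    have h5 : ‖γ t - γ s‖ * ‖γ w - γ u - (γ m - γ s)‖ ≤ 2 * r * (2 * δ) := by gcongr
    linarith
  set c₀ := (W / 2) ^ q / (16 * r ^ 3) ^ p with hc₀
  have hlow : ENNReal.ofReal c₀ * ENNReal.ofReal δ * ENNReal.ofReal δ * ENNReal.ofReal δ
      ≤ menger p q γ γ' := by
    refine mul_le_setLIntegral_Ico ha0 ha1 fun s hs => ?_
    refine mul_le_setLIntegral_Ico hb0 hb1 fun t ht => ?_
    refine mul_le_setLIntegral_Ico hc0 hc1 fun m hm => ?_
    simp only [hγ', one_mul]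
    exact ENNReal.ofReal_le_ofReal (key s hs t ht m hm)
  have hc₀0 : 0 ≤ c₀ := by positivity
  have hfin : c₀ * δ * δ * δ ≤ M := by
    rw [← ENNReal.ofReal_le_ofReal_iff hM, ENNReal.ofReal_mul (by positivity),
      ENNReal.ofReal_mul (by positivity), ENNReal.ofReal_mul (by positivity)]
    exact hlow.trans hE
  have hδ3 : δ * δ * δ = W ^ (3:ℝ) / (12 ^ (3:ℝ) * r ^ (3:ℝ)) := by
    simp only [Real.rpow_ofNat]
    rw [hδ]; field_simp
  have hcc : c₀ = W ^ q / (2 ^ q * (16 ^ p * r ^ (3 * p))) := by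
    rw [hc₀, Real.div_rpow hW.le (by norm_num), Real.mul_rpow (by norm_num) (by positivity),
      ← Real.rpow_natCast, ← Real.rpow_mul hr.le, div_div]
    norm_num
  rw [mul_assoc, mul_assoc, ← mul_assoc δ, hδ3, hcc, div_mul_div_comm,
    div_le_iff₀ (by positivity)] at hfin
  rw [Real.rpow_add hW, Real.rpow_add hr]
  calc _ = W ^ q * W ^ (3:ℝ) := mul_comm _ _
    _ ≤ _ := hfin
    _ = _ := by ring

/-- The energy bound forces inscribed triangles to be uniformly flat at small scales. -/
lemma exists_wedgeNorm_le_of_menger_le {p q M : ℝ} (hp : 0 ≤ p) (hq : 0 ≤ q) :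
    ∃ K : ℝ, 0 < K ∧ ∀ γ γ' : ℝ → EuclideanSpace ℝ (Fin n), Function.Periodic γ 1 →
      (∀ s t, ‖γ s - γ t‖ ≤ |s - t|) → (∀ u, ‖γ' u‖ = 1) →
      menger p q γ γ' ≤ ENNReal.ofReal M → ∀ r : ℝ, 0 < r → r ≤ 1 → ∀ u v w : ℝ,
        ‖γ v - γ u‖ ≤ r → ‖γ w - γ u‖ ≤ r →
        wedgeNorm (γ v - γ u) (γ w - γ u) ≤ K * r ^ ((3 + 3 * p) / (3 + q)) := by
  set N := max M 1 * 12 ^ (3:ℝ) * 2 ^ q * 16 ^ p with hN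
  have hM : 0 < max M 1 := by positivity
  have hN0 : 0 < N := by positivity
  have hq3 : 0 < 3 + q := by positivity
  refine ⟨N ^ (1 / (3 + q)), by positivity, fun γ γ' hper hlip hγ' hE r hr hr1 u v w hv hw => ?_⟩
  have h := wedgeNorm_rpow_le_of_menger_le hp hq hM.le hper hlip hγ'
    (hE.trans (ENNReal.ofReal_le_ofReal (le_max_left M 1))) hr hr1 hv hw
  rw [← Real.rpow_le_rpow_iff (wedgeNorm_nonneg _ _) (by positivity) hq3,
    Real.mul_rpow (by positivity) (by positivity), ← Real.rpow_mul hN0.le, ← Real.rpow_mul hr.le,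
    div_mul_cancel₀ _ hq3.ne', div_mul_cancel₀ _ hq3.ne', Real.rpow_one]
  exact h

end Flatness

section Chords

variable {n : ℕ} {γ : ℝ → EuclideanSpace ℝ (Fin n)}

lemma exists_forall_mul_rpow_le {B ν ε : ℝ} (hB : 0 < B) (hν : 0 < ν) (hε : 0 < ε) :
    ∃ ρ : ℝ, 0 < ρ ∧ ∀ r, 0 ≤ r → r ≤ ρ → B * r ^ ν ≤ ε := by
  refine ⟨(ε / B) ^ (1 / ν), by positivity, fun r hr hrρ => ?_⟩
  have h := Real.rpow_le_rpow hr hrρ hν.le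
  rw [← Real.rpow_mul (by positivity), one_div_mul_cancel hν.ne', Real.rpow_one,
    le_div_iff₀ hB] at h
  linarith

/-- A unit speed closed `C¹` curve is almost straight at small scales. -/
lemma exists_chord_ge (hγ : ContDiff ℝ 1 γ) (hper : Function.Periodic γ 1)
    (hunit : ∀ u, ‖deriv γ u‖ = 1) :
    ∃ h₀ : ℝ, 0 < h₀ ∧ ∀ h, 0 ≤ h → h ≤ h₀ → ∀ u, 15 / 16 * h ≤ ‖γ (u + h) - γ u‖ := by
  have hc : Continuous (deriv γ) := hγ.continuous_deriv le_rfl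
  have huc := (isCompact_Icc (a := (0:ℝ)) (b := 2)).uniformContinuousOn_of_continuous
    hc.continuousOn
  obtain ⟨ε, hε, huc⟩ := Metric.uniformContinuousOn_iff_le.mp huc (1 / 16) (by norm_num)
  refine ⟨min ε 1, by positivity, fun h hh hhε u => ?_⟩
  have hhε1 : h ≤ ε := hhε.trans (min_le_left _ _)
  have hh1 : h ≤ 1 := hhε.trans (min_le_right _ _)
  have hred : ∀ t : ℝ, γ t = γ (t - ⌊u⌋) := fun t => by
    have h := hper.sub_zsmul_eq (x := t) ⌊u⌋
    rw [zsmul_one] at h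
    exact h.symm
  rw [hred (u + h), hred u, add_sub_right_comm]
  have hf : u - ⌊u⌋ = Int.fract u := rfl
  have h0 := Int.fract_nonneg u
  have h1 := (Int.fract_lt_one u).le
  rw [hf]
  set x := Int.fract u
  have hd : Differentiable ℝ γ := hγ.differentiable one_ne_zero
  have hder : ∀ t ∈ Icc x (x + h), HasDerivWithinAt (fun t => γ t - t • deriv γ x)
      (deriv γ t - deriv γ x) (Icc x (x + h)) t := fun t _ => by
    have := (hd t).hasDerivAt.sub ((hasDerivAt_id t).smul_const (deriv γ x))
    simp only [one_smul] at this
    exact this.hasDerivWithinAt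
  have hmv := Convex.norm_image_sub_le_of_norm_hasDerivWithin_le hder (C := 1 / 16)
    (fun t ht => by
      rw [← dist_eq_norm]
      refine huc t ⟨by linarith [ht.1], by linarith [ht.2]⟩ x ⟨h0, by linarith⟩ ?_
      rw [Real.dist_eq, abs_le]
      constructor <;> linarith [ht.1, ht.2])
    (convex_Icc _ _) (left_mem_Icc.mpr (by linarith)) (right_mem_Icc.mpr (by linarith))
  have e : γ (x + h) - (x + h) • deriv γ x - (γ x - x • deriv γ x)
      = (γ (x + h) - γ x) - h • deriv γ x := by module
  rw [e, add_sub_cancel_left, Real.norm_eq_abs, abs_of_nonneg hh] at hmv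
  have h2 := norm_le_norm_add_norm_sub (γ (x + h) - γ x) (h • deriv γ x)
  rw [norm_smul, hunit, Real.norm_eq_abs, abs_of_nonneg hh] at h2
  linarith

/-- Uniform flatness of the triangles inscribed in `γ`, with gain `κ`. -/
def UniformlyFlat (K κ : ℝ) (γ : ℝ → EuclideanSpace ℝ (Fin n)) : Prop :=
  ∀ r : ℝ, 0 < r → r ≤ 1 → ∀ u v w : ℝ, ‖γ v - γ u‖ ≤ r → ‖γ w - γ u‖ ≤ r →
    wedgeNorm (γ v - γ u) (γ w - γ u) ≤ K * r ^ (2 + κ)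

/-- For a flat curve without folds up to scale `19 / 20 * h`, bisecting a chord of
parameter length `h` gains little length. -/
lemma UniformlyFlat.chord_bisect {K κ h : ℝ} (hF : UniformlyFlat K κ γ)
    (hlip : ∀ s t, ‖γ s - γ t‖ ≤ |s - t|) (hh : 0 < h) (hh1 : h ≤ 1)
    (hsmall : ∀ k, 0 < k → k ≤ 19 / 20 * h → ∀ u, 7 / 8 * k ≤ ‖γ (u + k) - γ u‖) (u : ℝ) :
    ‖γ (u + h / 2) - γ u‖ + ‖γ (u + h / 2 + h / 2) - γ (u + h / 2)‖
      - 12 * K ^ 2 * h ^ (2 * κ) * h ≤ ‖γ (u + h) - γ u‖ := by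
  set a := γ (u + h / 2) - γ u with ha
  set b := γ (u + h / 2 + h / 2) - γ (u + h / 2) with hb
  have hab : a + b = γ (u + h) - γ u := by
    rw [ha, hb, add_assoc, add_halves]; abel
  have ha7 : 7 / 16 * h ≤ ‖a‖ := by linarith [hsmall (h / 2) (by linarith) (by linarith) u]
  have hb7 : 7 / 16 * h ≤ ‖b‖ := by
    linarith [hsmall (h / 2) (by linarith) (by linarith) (u + h / 2)]
  have ha2 : ‖a‖ ≤ h / 2 := (hlip _ _).trans (by
    rw [add_sub_cancel_left, abs_of_pos (by linarith)])
  have hb2 : ‖b‖ ≤ h / 2 := (hlip _ _).trans (by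
    rw [add_sub_cancel_left, abs_of_pos (by linarith)])
  have hlong : 3 / 4 * h ≤ ‖a + b‖ := by
    have h1 := hsmall (19 / 20 * h) (by linarith) le_rfl u
    have h2 := hlip (u + h) (u + 19 / 20 * h)
    rw [abs_of_nonneg (by linarith)] at h2
    have h3 := norm_sub_le_norm_sub_add_norm_sub (γ (u + 19 / 20 * h)) (γ (u + h)) (γ u)
    rw [norm_sub_rev (γ (u + 19 / 20 * h)) (γ (u + h))] at h3
    rw [hab]
    linarith
  have hinner : 0 ≤ (inner ℝ a b : ℝ) := by
    have h1 := norm_add_sq_real a b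
    have h2 := pow_le_pow_left₀ (norm_nonneg _) ha2 2
    have h3 := pow_le_pow_left₀ (norm_nonneg _) hb2 2
    have h4 := pow_le_pow_left₀ (by positivity) hlong 2
    have h5 := sq_nonneg h
    nlinarith
  have hW : wedgeNorm a b ≤ K * h ^ (2 + κ) := by
    have h1 := hF h hh hh1 (u + h / 2) u (u + h / 2 + h / 2)
      (by rw [norm_sub_rev, ← ha]; linarith) (by rw [← hb]; linarith)
    rwa [← neg_sub, wedgeNorm_neg_left] at h1
  have hW2 : wedgeNorm a b ^ 2 ≤ K ^ 2 * h ^ (2 * κ) * h * h ^ 3 := by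
    calc wedgeNorm a b ^ 2 ≤ (K * h ^ (2 + κ)) ^ 2 :=
          pow_le_pow_left₀ (wedgeNorm_nonneg _ _) hW 2
      _ = _ := by
          rw [Real.rpow_add hh, two_mul κ, Real.rpow_add hh, Real.rpow_ofNat]; ring
  have hmain := norm_add_norm_sub_le hh ha7 hb7 hinner
  rw [← hab]
  have h3 : 0 < h ^ 3 := by positivity
  have : ‖a‖ + ‖b‖ - ‖a + b‖ ≤ 12 * K ^ 2 * h ^ (2 * κ) * h :=
    le_of_mul_le_mul_right (by linarith) h3
  linarith

/-- Uniform local bi-Lipschitz estimate for uniformly flat curves. -/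
lemma exists_local_biLipschitz {K κ : ℝ} (hK : 0 < K) (hκ : 0 < κ) :
    ∃ ρ : ℝ, 0 < ρ ∧ ∀ γ : ℝ → EuclideanSpace ℝ (Fin n), UniformlyFlat K κ γ →
      (∀ s t, ‖γ s - γ t‖ ≤ |s - t|) →
      (∃ h₀ : ℝ, 0 < h₀ ∧ ∀ h, 0 ≤ h → h ≤ h₀ → ∀ u, 15 / 16 * h ≤ ‖γ (u + h) - γ u‖) →
      ∀ h, 0 < h → h ≤ ρ → ∀ u, 7 / 8 * h ≤ ‖γ (u + h) - γ u‖ := by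
  set θ : ℝ := (1 / 2) ^ (2 * κ)
  have hθ1 : θ < 1 := Real.rpow_lt_one (by norm_num) (by norm_num) (by positivity)
  have hθ' : 0 < 1 - θ := by linarith
  set A := 12 * K ^ 2 / (1 - θ) with hA
  have hA0 : 0 < A := by positivity
  have hAθ : A * θ + 12 * K ^ 2 = A := by rw [hA]; field_simp; ring
  obtain ⟨ρ, hρ, hAρ⟩ :=
    exists_forall_mul_rpow_le hA0 (by positivity : 0 < 2 * κ) (by norm_num : (0:ℝ) < 1 / 16)
  refine ⟨min ρ 1, by positivity, fun γ hF hlip ⟨h₀, hh₀, hbase⟩ => ?_⟩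
  have hweak : ∀ h u, 0 < h → h ≤ min ρ 1 →
      (15 / 16 - A * h ^ (2 * κ)) * h ≤ ‖γ (u + h) - γ u‖ → 7 / 8 * h ≤ ‖γ (u + h) - γ u‖ := by
    intro h u hh hhρ hle
    have := hAρ h hh.le (hhρ.trans (min_le_left _ _))
    nlinarith
  have hind : ∀ j : ℕ, ∀ h, 0 < h → h ≤ min ρ 1 → h ≤ h₀ * (20 / 19) ^ j → ∀ u,
      (15 / 16 - A * h ^ (2 * κ)) * h ≤ ‖γ (u + h) - γ u‖ := by
    intro j
    induction j with
    | zero =>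
      intro h hh _ hhj u
      have h1 := hbase h hh.le (by simpa using hhj) u
      have h2 : 0 ≤ A * h ^ (2 * κ) * h := by positivity
      linarith
    | succ j ih =>
      intro h hh hhρ hhj u
      have hprev : ∀ k, 0 < k → k ≤ 19 / 20 * h → ∀ u,
          (15 / 16 - A * k ^ (2 * κ)) * k ≤ ‖γ (u + k) - γ u‖ := fun k hk hkh =>
        ih k hk (by linarith) (by rw [pow_succ] at hhj; linarith)
      have hbis := hF.chord_bisect hlip hh (hhρ.trans (min_le_right _ _))
        (fun k hk hkh u => hweak k u hk (by linarith) (hprev k hk hkh u)) u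
      have h1 := hprev (h / 2) (by linarith) (by linarith) u
      have h2 := hprev (h / 2) (by linarith) (by linarith) (u + h / 2)
      have h3 : (h / 2) ^ (2 * κ) = θ * h ^ (2 * κ) := by
        rw [← Real.mul_rpow (by norm_num) hh.le]; congr 1; ring
      rw [h3] at h1 h2
      calc (15 / 16 - A * h ^ (2 * κ)) * h
          = (15 / 16 - (A * θ + 12 * K ^ 2) * h ^ (2 * κ)) * h := by rw [hAθ]
        _ ≤ _ := by linarith
  intro h hh hhρ u
  obtain ⟨j, hj⟩ := pow_unbounded_of_one_lt (h / h₀) (by norm_num : (1:ℝ) < 20 / 19)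
  rw [div_lt_iff₀' hh₀] at hj
  exact hweak h u hh hhρ (hind j h hh hhρ hj.le u)

/-- Distant strands of a uniformly flat embedded curve stay apart. -/
lemma UniformlyFlat.le_norm_sub_of_separated {K κ ρ : ℝ} (hF : UniformlyFlat K κ γ)
    (hlip : ∀ s t, ‖γ s - γ t‖ ≤ |s - t|) (hper : Function.Periodic γ 1) (hinj : InjCircle γ)
    (hρ : 0 < ρ) (hρ2 : ρ ≤ 1 / 2) (hKρ : ∀ r, 0 ≤ r → r ≤ ρ → K * r ^ κ ≤ 1 / 2)
    (hloc : ∀ h, 0 < h → h ≤ ρ → ∀ u, 7 / 8 * h ≤ ‖γ (u + h) - γ u‖)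
    {u v : ℝ} (huv : u + ρ ≤ v) (hvu : v ≤ u + 1 - ρ) : ρ / 4 ≤ ‖γ u - γ v‖ := by
  have hcont : Continuous γ := (LipschitzWith.of_dist_le_mul (K := 1) (fun s t => by
    simpa [dist_eq_norm] using hlip s t)).continuous
  let g : ℝ × ℝ → ℝ := fun x => ‖γ x.1 - γ (x.1 + x.2)‖
  obtain ⟨⟨s, k⟩, hsk, hmin⟩ := (isCompact_Icc.prod isCompact_Icc :
    IsCompact (Icc (0:ℝ) 1 ×ˢ Icc ρ (1 - ρ))).exists_isMinOn (f := g)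
      ⟨(0, ρ), by simp, by constructor <;> linarith⟩ (by fun_prop)
  have hk1 : ρ ≤ k := hsk.2.1
  have hk2 : k ≤ 1 - ρ := hsk.2.2
  set d := ‖γ s - γ (s + k)‖ with hd
  have hmin' : ∀ x y, x + ρ ≤ y → y ≤ x + 1 - ρ → d ≤ ‖γ x - γ y‖ := by
    intro x y hxy hyx
    have h := hmin (a := (Int.fract x, y - x)) ⟨⟨Int.fract_nonneg x, (Int.fract_lt_one x).le⟩,
      by linarith, by linarith⟩
    have e1 : γ (Int.fract x) = γ x := by
      have h := hper.sub_zsmul_eq (x := x) ⌊x⌋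
      rwa [zsmul_one] at h
    have e2 : γ (Int.fract x + (y - x)) = γ y := by
      have h := hper.sub_zsmul_eq (x := y) ⌊x⌋
      rw [zsmul_one] at h
      rw [← h]
      congr 1
      rw [Int.fract]; ring
    simpa [g, e1, e2] using h
  refine le_trans ?_ (hmin' u v huv hvu)
  by_contra! hlt
  have hd0 : 0 < d := by
    rw [hd, norm_pos_iff, sub_ne_zero]
    intro he
    obtain ⟨m, hm⟩ := hinj _ _ he
    have hm' : k = m := by linarith
    have h1 : (0:ℝ) < m := by linarith
    have h2 : (m:ℝ) < 1 := by linarith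
    norm_cast at h1 h2
    omega
  have hstep : ∀ t, 7 / 8 * d ≤ ‖γ (t + d) - γ t‖ := hloc d hd0 (by linarith)
  have hstep' : ∀ t, ‖γ (t + d) - γ t‖ ≤ d := fun t => (hlip _ _).trans (by
    rw [add_sub_cancel_left, abs_of_pos hd0])
  have hback : γ (s - d + d) = γ s := by rw [sub_add_cancel]
  have hfar : d ≤ ‖γ (s + d) - γ (s + k)‖ := by
    rcases le_total (s + d + ρ) (s + k) with h | h
    · exact hmin' _ _ h (by linarith)
    · have h1 := hloc (k - d) (by linarith) (by linarith) (s + d)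
      rw [show s + d + (k - d) = s + k by ring, norm_sub_rev] at h1
      linarith
  have hfar' : d ≤ ‖γ (s - d) - γ (s + k)‖ := by
    rcases le_total (s + k) (s - d + 1 - ρ) with h | h
    · exact hmin' _ _ (by linarith) h
    · have h1 := hloc (1 - k - d) (by linarith) (by linarith) (s + k)
      rw [show s + k + (1 - k - d) = s - d + 1 by ring, hper] at h1
      linarith
  have hwide : 7 / 4 * d ≤ ‖γ (s + d) - γ (s - d)‖ := by
    have h1 := hloc (2 * d) (by linarith) (by linarith) (s - d)
    rw [show s - d + 2 * d = s + d by ring] at h1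
    linarith
  have hb : ‖γ (s + k) - γ s‖ = d := norm_sub_rev _ _
  have ha' : ‖γ (s - d) - γ s‖ ≤ d := by
    rw [norm_sub_rev, ← hback]; exact hstep' _
  have ha'7 : 7 / 8 * d ≤ ‖γ (s - d) - γ s‖ := by
    rw [norm_sub_rev, ← hback]; exact hstep _
  have hflat : K * d ^ (2 + κ) ≤ d ^ 2 / 2 := by
    have h1 := hKρ d hd0.le (by linarith)
    rw [Real.rpow_add hd0, Real.rpow_ofNat]
    nlinarith [sq_nonneg d]
  have hd1 : d ≤ 1 := by linarith
  rcases exists_wedgeNorm_ge hd0 hb (hstep' s) ha' (hstep s) ha'7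
    (by rwa [sub_sub_sub_cancel_right]) (by rwa [sub_sub_sub_cancel_right])
    (by rwa [sub_sub_sub_cancel_right]) with h | h
  · linarith [hF d hd0 hd1 s (s + d) (s + k) (hstep' s) hb.le]
  · linarith [hF d hd0 hd1 s (s - d) (s + k) ha' hb.le]

lemma circleDist_le (u v : ℝ) (k : ℤ) : circleDist u v ≤ |u - v - k| :=
  ciInf_le ⟨0, by rintro _ ⟨m, rfl⟩; exact abs_nonneg _⟩ k

end Chords

/-- **Uniform bi-Lipschitz estimate.** In the sub-critical range `q > 1`,
`(2/3)q + 1 < p < q + 2/3`, for every `M < ∞` there is a constant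
`C(M,p,q) > 0` such that every injective arc-length parametrized `C¹` curve
with `E_{p,q}(γ) ≤ M` satisfies `d_{ℝ/ℤ}(u,v) ≤ C(M,p,q) |γ(u) - γ(v)|`. -/
theorem uniform_biLipschitz (n : ℕ) (p q M : ℝ)
    (hq : 1 < q) (hp₁ : 2/3 * q + 1 < p) (hp₂ : p < q + 2/3) :
    ∃ C : ℝ, 0 < C ∧
      ∀ γ : ℝ → EuclideanSpace ℝ (Fin n),
        ContDiff ℝ 1 γ → Function.Periodic γ 1 → InjCircle γ →
        (∀ u, ‖deriv γ u‖ = 1) →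
        menger p q γ (deriv γ) ≤ ENNReal.ofReal M →
        ∀ u v : ℝ, circleDist u v ≤ C * ‖γ u - γ v‖ := by
  have hκ : 0 < (3 + 3 * p) / (3 + q) - 2 := by
    rw [sub_pos, lt_div_iff₀ (by linarith)]; linarith
  set κ := (3 + 3 * p) / (3 + q) - 2 with hκdef
  obtain ⟨K, hK, hflat⟩ := exists_wedgeNorm_le_of_menger_le (n := n) (M := M)
    (by linarith : 0 ≤ p) (by linarith : 0 ≤ q)
  obtain ⟨ρ₁, hρ₁, hlocal⟩ := exists_local_biLipschitz (n := n) hK hκ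
  obtain ⟨ρ₂, hρ₂, hKρ⟩ := exists_forall_mul_rpow_le hK hκ (by norm_num : (0:ℝ) < 1 / 2)
  set ρ := min (min ρ₁ ρ₂) (1 / 2)
  have hρ : 0 < ρ := by positivity
  have hρ2 : ρ ≤ 1 / 2 := min_le_right _ _
  have hρle₁ : ρ ≤ ρ₁ := (min_le_left _ _).trans (min_le_left _ _)
  have hρle₂ : ρ ≤ ρ₂ := (min_le_left _ _).trans (min_le_right _ _)
  refine ⟨4 / ρ, by positivity, fun γ hγ hper hinj hunit hE u v => ?_⟩
  have hlip : ∀ s t, ‖γ s - γ t‖ ≤ |s - t| := fun s t => by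
    have h := Convex.norm_image_sub_le_of_norm_deriv_le (𝕜 := ℝ) (f := γ) (s := univ) (C := 1)
      (fun x _ => hγ.differentiable one_ne_zero x) (fun x _ => (hunit x).le) convex_univ
      (mem_univ t) (mem_univ s)
    simpa using h
  have hF : UniformlyFlat K κ γ := by
    have h := hflat γ (deriv γ) hper hlip hunit hE
    rwa [show (3 + 3 * p) / (3 + q) = 2 + κ by rw [hκdef]; ring] at h
  have hloc : ∀ h, 0 < h → h ≤ ρ → ∀ u, 7 / 8 * h ≤ ‖γ (u + h) - γ u‖ := fun h hh hhρ =>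
    hlocal γ hF hlip (exists_chord_ge hγ hper hunit) h hh (hhρ.trans hρle₁)
  set m := ⌊u - v⌋
  have ht0 : 0 ≤ u - v - m := Int.fract_nonneg (u - v)
  have ht1 : u - v - m < 1 := Int.fract_lt_one (u - v)
  set t := u - v - m with ht
  have hu : γ u = γ (v + t) := by
    have h := hper.sub_zsmul_eq (x := u) m
    rw [zsmul_one] at h
    rw [← h]; congr 1; rw [ht]; ring
  have hd₁ : circleDist u v ≤ t := (circleDist_le u v m).trans (abs_of_nonneg ht0).le
  have hd₂ : circleDist u v ≤ 1 - t := by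
    refine (circleDist_le u v (m + 1)).trans (le_of_eq ?_)
    push_cast
    rw [← sub_sub, ← ht, abs_sub_comm, abs_of_pos (by linarith)]
  have h2 : (2:ℝ) ≤ 4 / ρ := by rw [le_div_iff₀ hρ]; linarith
  rw [hu]
  have hnn := norm_nonneg (γ (v + t) - γ v)
  have hgrow := mul_le_mul_of_nonneg_right h2 hnn
  rcases le_or_gt t ρ with h | h
  · rcases ht0.eq_or_lt with h0 | h0
    · linarith
    · linarith [hloc t h0 h v]
  rcases le_or_gt (1 - t) ρ with h' | h'
  · have h3 := hloc (1 - t) (by linarith) h' (v + t)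
    rw [show v + t + (1 - t) = v + 1 by ring, hper, norm_sub_rev] at h3
    linarith
  · have h3 := hF.le_norm_sub_of_separated hlip hper hinj hρ hρ2
      (fun r hr hrρ => hKρ r hr (hrρ.trans hρle₂)) hloc
      (u := v) (v := v + t) (by linarith) (by linarith)
    rw [norm_sub_rev] at h3
    have h4 : 4 / ρ * (ρ / 4) ≤ 4 / ρ * ‖γ (v + t) - γ v‖ := by gcongr
    rw [div_mul_div_comm, mul_comm, div_self (by positivity)] at h4
    linarith
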